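/- (Boltzmann's H theorem, equality case.) Let f : ℝ³ → ℝ be continuous, strictly positive and rapidly decaying, with ln f of polynomial growth. If ∫_{ℝ³} C(f)(v) ln f(v) dv = 0, then f(v')f(v*') = f(v)f(v*) for all v, v* ∈ ℝ³ and all unit vectors ω, and consequently C(f)(v) = 0 for every v ∈ ℝ³. -/

import Mathlib

/-!
The proof symmetrizes the entropy production. On triples `(ω, v, v*)` the exchange `v ↔ v*` and the
collision `(v, v*) ↦ (v', v*')` at fixed `ω` are measure-preserving involutions; the first fixes
`D = (f(v')f(v*') − f(v)f(v*)) |(v−v*)·ω|` and the second changes its sign. Averaging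
`∫ C(f) ln f = ∫ D ln f(v)` over both gives
`−4 ∫ C(f) ln f = ∫ |(v−v*)·ω| (a − b)(ln a − ln b)` with `a = f(v')f(v*')`, `b = f(v)f(v*)`.
The integrand on the right is continuous and nonnegative, so it vanishes identically once the
integral does. Hence `a = b` where `(v−v*)·ω ≠ 0`, and elsewhere the collision does nothing.
-/

open MeasureTheory
open scoped RealInnerProductSpace

noncomputable section

/-- The post-collision velocity `v' = v − ((v−v*)·ω)ω`. -/
def vPost (v vs ω : EuclideanSpace ℝ (Fin 3)) : EuclideanSpace ℝ (Fin 3) :=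
  v - ⟪v - vs, ω⟫ • ω

/-- The post-collision velocity `v*' = v* + ((v−v*)·ω)ω`. -/
def vsPost (v vs ω : EuclideanSpace ℝ (Fin 3)) : EuclideanSpace ℝ (Fin 3) :=
  vs + ⟪v - vs, ω⟫ • ω

/-- The surface measure on the unit sphere `S² ⊂ ℝ³`. -/
def sphereMeasure : Measure (Metric.sphere (0 : EuclideanSpace ℝ (Fin 3)) 1) :=
  (volume : Measure (EuclideanSpace ℝ (Fin 3))).toSphere

/-- The (dimensionless, hard-sphere) Boltzmann collision integral
`C(f)(v) = ∫_{ℝ³}∫_{S²} (f(v')f(v*') − f(v)f(v*)) |(v−v*)·ω| dω dv*`. -/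
def collisionIntegral (f : EuclideanSpace ℝ (Fin 3) → ℝ)
    (v : EuclideanSpace ℝ (Fin 3)) : ℝ :=
  ∫ vs, (∫ ω : Metric.sphere (0 : EuclideanSpace ℝ (Fin 3)) 1,
    (f (vPost v vs ω) * f (vsPost v vs ω) - f v * f vs) *
      |⟪v - vs, (ω : EuclideanSpace ℝ (Fin 3))⟫| ∂sphereMeasure)

/-- A function on `ℝ³` is rapidly decaying if `sup_v (1+|v|)^k f(v) < ∞` for every `k ∈ ℕ`. -/
def RapidlyDecaying (f : EuclideanSpace ℝ (Fin 3) → ℝ) : Prop :=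
  ∀ k : ℕ, ∃ C : ℝ, ∀ v, (1 + ‖v‖) ^ k * f v ≤ C

/-- `ln f` has polynomial growth: `|ln f(v)| ≤ C(1+|v|)^m` for some constants `C, m`. -/
def LogPolyGrowth (f : EuclideanSpace ℝ (Fin 3) → ℝ) : Prop :=
  ∃ (C : ℝ) (m : ℕ), ∀ v, |Real.log (f v)| ≤ C * (1 + ‖v‖) ^ m

/-! ### Symmetrization of integrals -/

lemma measurePreserving_of_involutive {E : Type*} [NormedAddCommGroup E] [NormedSpace ℝ E]
    [MeasurableSpace E] [BorelSpace E] [FiniteDimensional ℝ E] (μ : Measure E)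
    [μ.IsAddHaarMeasure] {L : E →ₗ[ℝ] E} (hL : Function.Involutive L) :
    MeasurePreserving L μ μ := by
  have hdet : LinearMap.det L * LinearMap.det L = 1 := by
    rw [← LinearMap.det_comp, show L ∘ₗ L = LinearMap.id from LinearMap.ext hL, LinearMap.det_id]
  have habs : |LinearMap.det L| = 1 := by
    rcases mul_self_eq_one_iff.1 hdet with h | h <;> simp [h]
  refine ⟨L.continuous_of_finiteDimensional.measurable, ?_⟩
  rw [Measure.map_linearMap_addHaar_eq_smul_addHaar μ (left_ne_zero_of_mul_eq_one hdet), abs_inv,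
    habs, inv_one, ENNReal.ofReal_one, one_smul]

section Symmetrization

variable {α : Type*} [MeasurableSpace α] {μ : Measure α} {T : α → α} {g : α → ℝ}

lemma integrable_add_comp (hT : MeasurePreserving T μ μ) (hg : Integrable g μ) :
    Integrable (fun x => g x + g (T x)) μ :=
  hg.add (hT.integrable_comp_of_integrable hg)

lemma integral_add_comp (hT : MeasurePreserving T μ μ) (hg : Integrable g μ) :
    ∫ x, g x + g (T x) ∂μ = 2 * ∫ x, g x ∂μ := by
  have hcomp : ∫ x, g (T x) ∂μ = ∫ x, g x ∂μ := by
    rw [← integral_map hT.aemeasurable (by rw [hT.map_eq]; exact hg.1), hT.map_eq]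
  calc ∫ x, g x + g (T x) ∂μ = ∫ x, g x ∂μ + ∫ x, g (T x) ∂μ :=
        integral_add hg (hT.integrable_comp_of_integrable hg)
    _ = 2 * ∫ x, g x ∂μ := by rw [hcomp, two_mul]

end Symmetrization

lemma eq_zero_of_integral_eq_zero {α : Type*} [TopologicalSpace α] [MeasurableSpace α]
    {μ : Measure α} [μ.IsOpenPosMeasure] {g : α → ℝ} (hg : Continuous g) (hnonneg : 0 ≤ g)
    (hint : Integrable g μ) (hzero : ∫ x, g x ∂μ = 0) : g = 0 :=
  Measure.eq_of_ae_eq ((integral_eq_zero_iff_of_nonneg hnonneg hint).1 hzero) hg continuous_zero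

lemma sub_mul_log_sub_log_nonneg {a b : ℝ} (ha : 0 < a) (hb : 0 < b) :
    0 ≤ (a - b) * (Real.log a - Real.log b) :=
  (monovaryOn_id_iff.2 Real.strictMonoOn_log.monotoneOn).symm.sub_mul_sub_nonneg hb ha

lemma sub_mul_log_sub_log_eq_zero_iff {a b : ℝ} (ha : 0 < a) (hb : 0 < b) :
    (a - b) * (Real.log a - Real.log b) = 0 ↔ a = b := by
  rw [mul_eq_zero, sub_eq_zero, sub_eq_zero, Real.log_injOn_pos.eq_iff ha hb, or_self]

/-! ### The collision map -/

section CollisionMap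

variable {E : Type*} [NormedAddCommGroup E] [InnerProductSpace ℝ E]

/-- The collision `(v, v*) ↦ (v', v*')` with fixed `ω`, in any real inner product space. For
`|ω| = 1` it is the reflection of `E × E` in the hyperplane `(v−v*)·ω = 0` along `(ω, −ω)`. -/
def collisionMap (ω : E) : E × E →ₗ[ℝ] E × E :=
  Module.preReflection (ω, -ω) ((innerₗ E ω).coprod (-innerₗ E ω))

lemma collisionMap_apply (ω : E) (p : E × E) :
    collisionMap ω p = (p.1 - ⟪p.1 - p.2, ω⟫ • ω, p.2 + ⟪p.1 - p.2, ω⟫ • ω) := by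
  ext <;> simp [collisionMap, Module.preReflection_apply, real_inner_comm ω, inner_add_right,
    sub_eq_add_neg]

lemma involutive_collisionMap {ω : E} (hω : ‖ω‖ = 1) : Function.Involutive (collisionMap ω) :=
  Module.involutive_preReflection (by simp [hω, one_add_one_eq_two])

lemma collisionMap_swap (ω : E) (p : E × E) :
    collisionMap ω p.swap = (collisionMap ω p).swap := by
  simp only [collisionMap_apply, Prod.swap, inner_sub_left]
  ext1 <;> module

lemma inner_collisionMap {ω : E} (hω : ‖ω‖ = 1) (p : E × E) :
    ⟪(collisionMap ω p).1 - (collisionMap ω p).2, ω⟫ = -⟪p.1 - p.2, ω⟫ := by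
  simp only [collisionMap_apply, inner_sub_left, inner_add_left, real_inner_smul_left,
    real_inner_self_eq_norm_sq, hω]
  ring

lemma sq_norm_collisionMap {ω : E} (hω : ‖ω‖ = 1) (p : E × E) :
    ‖(collisionMap ω p).1‖ ^ 2 + ‖(collisionMap ω p).2‖ ^ 2 = ‖p.1‖ ^ 2 + ‖p.2‖ ^ 2 := by
  simp only [collisionMap_apply, norm_sub_sq_real, norm_add_sq_real, norm_smul, inner_smul_right,
    hω, inner_sub_left, Real.norm_eq_abs, mul_one, sq_abs]
  ring

end CollisionMap

section PairProduct

variable {α : Type*}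

/-- The product `f(v) f(v*)` of the values of `f` at the two velocities of a pair of particles. -/
def pairProduct (f : α → ℝ) (p : α × α) : ℝ := f p.1 * f p.2

lemma pairProduct_swap (f : α → ℝ) (p : α × α) : pairProduct f p.swap = pairProduct f p :=
  mul_comm _ _

lemma pairProduct_pos {f : α → ℝ} (hf : ∀ v, 0 < f v) (p : α × α) : 0 < pairProduct f p :=
  mul_pos (hf _) (hf _)

lemma log_pairProduct {f : α → ℝ} (hf : ∀ v, 0 < f v) (p : α × α) :
    Real.log (pairProduct f p) = Real.log (f p.1) + Real.log (f p.2) :=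
  Real.log_mul (hf _).ne' (hf _).ne'

lemma continuous_pairProduct [TopologicalSpace α] {f : α → ℝ} (hf : Continuous f) :
    Continuous (pairProduct f) := by
  unfold pairProduct
  fun_prop

end PairProduct

/-! ### The space of collisions and its symmetries -/

/-- The space of collisions `(ω, (v, v*))`; `ω` comes first so that the collision map is a skew
product over the sphere. -/
abbrev Collisions (E : Type*) [NormedAddCommGroup E] : Type _ := Metric.sphere (0 : E) 1 × (E × E)

namespace Collisions

section Symmetries

variable {E : Type*} [NormedAddCommGroup E] [InnerProductSpace ℝ E]

/-- The collision involution `(ω, v, v*) ↦ (ω, v', v*')`. -/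
def collide (x : Collisions E) : Collisions E := (x.1, collisionMap (x.1 : E) x.2)

/-- The exchange of particles `(ω, v, v*) ↦ (ω, v*, v)`. -/
def exchange (x : Collisions E) : Collisions E := (x.1, x.2.swap)

lemma collide_collide (x : Collisions E) : collide (collide x) = x :=
  Prod.ext rfl (involutive_collisionMap (norm_eq_of_mem_sphere x.1) x.2)

lemma collide_exchange (x : Collisions E) : collide (exchange x) = exchange (collide x) :=
  Prod.ext rfl (collisionMap_swap _ _)

lemma continuous_collide : Continuous (collide (E := E)) := by
  unfold collide
  simp only [collisionMap_apply]
  fun_prop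

/-- The hard-sphere collision kernel `|(v−v*)·ω|`. -/
def kernel (x : Collisions E) : ℝ := |⟪x.2.1 - x.2.2, (x.1 : E)⟫|

lemma kernel_collide (x : Collisions E) : kernel (collide x) = kernel x := by
  rw [kernel, collide, inner_collisionMap (norm_eq_of_mem_sphere x.1), abs_neg, kernel]

lemma kernel_exchange (x : Collisions E) : kernel (exchange x) = kernel x := by
  rw [kernel, kernel, ← abs_neg, ← inner_neg_left, neg_sub]
  rfl

lemma continuous_kernel : Continuous (kernel (E := E)) := by
  unfold kernel
  fun_prop

lemma collide_eq_self_of_kernel_eq_zero {x : Collisions E} (hx : kernel x = 0) :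
    collide x = x := by
  simp [collide, collisionMap_apply, abs_eq_zero.1 hx]

/-- The integrand `(f(v')f(v*') − f(v)f(v*)) |(v−v*)·ω|` of the collision integral. -/
def density (f : E → ℝ) (x : Collisions E) : ℝ :=
  (pairProduct f (collide x).2 - pairProduct f x.2) * kernel x

lemma density_collide (f : E → ℝ) (x : Collisions E) : density f (collide x) = -density f x := by
  simp only [density, collide_collide, kernel_collide]
  ring

lemma density_exchange (f : E → ℝ) (x : Collisions E) : density f (exchange x) = density f x := by
  rw [density, density, collide_exchange, kernel_exchange]
  exact congrArg (· * kernel x) (congrArg₂ _ (pairProduct_swap f _) (pairProduct_swap f _))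

lemma density_mul_add_swap (f : E → ℝ) (φ : E × E → ℝ) (x : Collisions E) :
    density f x * (φ x.2 + φ x.2.swap) =
      density f x * φ x.2 + density f (exchange x) * φ (exchange x).2 := by
  rw [density_exchange, mul_add, exchange]

lemma density_mul_sub_collide (f : E → ℝ) (φ : E × E → ℝ) (x : Collisions E) :
    density f x * (φ x.2 - φ (collide x).2) =
      density f x * φ x.2 + density f (collide x) * φ (collide x).2 := by
  rw [density_collide, mul_sub, neg_mul, sub_eq_add_neg]

lemma continuous_density {f : E → ℝ} (hf : Continuous f) : Continuous (density f) :=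
  (((continuous_pairProduct hf).comp continuous_collide.snd).sub
    ((continuous_pairProduct hf).comp continuous_snd)).mul continuous_kernel

/-- The entropy production `|(v−v*)·ω| (a − b)(ln a − ln b)` of a collision, where
`a = f(v')f(v*')` and `b = f(v)f(v*)`. -/
def entropyProduction (f : E → ℝ) (x : Collisions E) : ℝ :=
  density f x * (Real.log (pairProduct f (collide x).2) - Real.log (pairProduct f x.2))

lemma entropyProduction_eq_neg (f : E → ℝ) :
    entropyProduction f = fun x => -(density f x *
      (Real.log (pairProduct f x.2) - Real.log (pairProduct f (collide x).2))) := by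
  ext x
  rw [entropyProduction, ← mul_neg, neg_sub]

lemma entropyProduction_eq_kernel_mul (f : E → ℝ) (x : Collisions E) :
    entropyProduction f x = kernel x * ((pairProduct f (collide x).2 - pairProduct f x.2) *
      (Real.log (pairProduct f (collide x).2) - Real.log (pairProduct f x.2))) := by
  unfold entropyProduction density
  ring

lemma entropyProduction_nonneg {f : E → ℝ} (hf : ∀ v, 0 < f v) : 0 ≤ entropyProduction f := by
  intro x
  rw [entropyProduction_eq_kernel_mul]
  exact mul_nonneg (abs_nonneg _)
    (sub_mul_log_sub_log_nonneg (pairProduct_pos hf _) (pairProduct_pos hf _))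

lemma entropyProduction_eq_zero_iff {f : E → ℝ} (hf : ∀ v, 0 < f v) {x : Collisions E} :
    entropyProduction f x = 0 ↔ pairProduct f (collide x).2 = pairProduct f x.2 := by
  rw [entropyProduction_eq_kernel_mul, mul_eq_zero,
    sub_mul_log_sub_log_eq_zero_iff (pairProduct_pos hf _) (pairProduct_pos hf _)]
  exact or_iff_right_of_imp fun hx => by rw [collide_eq_self_of_kernel_eq_zero hx]

lemma continuous_entropyProduction {f : E → ℝ} (hf : Continuous f) (hpos : ∀ v, 0 < f v) :
    Continuous (entropyProduction f) := by
  have hlog : Continuous fun p => Real.log (pairProduct f p) :=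
    (continuous_pairProduct hf).log fun p => (pairProduct_pos hpos p).ne'
  exact (continuous_density hf).mul
    ((hlog.comp continuous_collide.snd).sub (hlog.comp continuous_snd))

end Symmetries

/-! ### The weak form of the collision operator -/

section WeakForm

variable {E : Type*} [NormedAddCommGroup E] [InnerProductSpace ℝ E] [FiniteDimensional ℝ E]
  [MeasurableSpace E] [BorelSpace E]

variable (E) in
/-- The measure `dω dv dv*` on the space of collisions. -/
def measure : Measure (Collisions E) := (volume : Measure E).toSphere.prod (volume.prod volume)

instance : (measure E).IsOpenPosMeasure :=
  inferInstanceAs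
    ((volume : Measure E).toSphere.prod ((volume : Measure E).prod volume)).IsOpenPosMeasure

lemma measurePreserving_collide : MeasurePreserving collide (measure E) (measure E) :=
  (MeasurePreserving.id (volume : Measure E).toSphere).skew_product
    (g := fun ω => collisionMap (ω : E)) continuous_collide.snd.measurable
    (.of_forall fun ω => (measurePreserving_of_involutive _
      (involutive_collisionMap (norm_eq_of_mem_sphere ω))).map_eq)

lemma measurePreserving_exchange : MeasurePreserving exchange (measure E) (measure E) :=
  (MeasurePreserving.id _).prod Measure.measurePreserving_swap

variable {f : E → ℝ} {φ : E × E → ℝ}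

lemma integrable_density_mul_add_swap
    (h : Integrable (fun x => density f x * φ x.2) (measure E)) :
    Integrable (fun x => density f x * (φ x.2 + φ x.2.swap)) (measure E) := by
  simpa only [density_mul_add_swap] using integrable_add_comp measurePreserving_exchange h

lemma integral_density_mul_add_swap
    (h : Integrable (fun x => density f x * φ x.2) (measure E)) :
    ∫ x, density f x * (φ x.2 + φ x.2.swap) ∂measure E =
      2 * ∫ x, density f x * φ x.2 ∂measure E := by
  simpa only [density_mul_add_swap] using integral_add_comp measurePreserving_exchange h

lemma integrable_density_mul_sub_collide
    (h : Integrable (fun x => density f x * φ x.2) (measure E)) :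
    Integrable (fun x => density f x * (φ x.2 - φ (collide x).2)) (measure E) := by
  simpa only [density_mul_sub_collide] using integrable_add_comp measurePreserving_collide h

lemma integral_density_mul_sub_collide
    (h : Integrable (fun x => density f x * φ x.2) (measure E)) :
    ∫ x, density f x * (φ x.2 - φ (collide x).2) ∂measure E =
      2 * ∫ x, density f x * φ x.2 ∂measure E := by
  simpa only [density_mul_sub_collide] using integral_add_comp measurePreserving_collide h

lemma integrable_density_mul_log_pairProduct (hf : ∀ v, 0 < f v)
    (h : Integrable (fun x => density f x * Real.log (f x.2.1)) (measure E)) :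
    Integrable (fun x => density f x * Real.log (pairProduct f x.2)) (measure E) := by
  simpa only [log_pairProduct hf, Prod.fst_swap] using
    integrable_density_mul_add_swap (φ := fun p => Real.log (f p.1)) h

lemma integrable_entropyProduction (hf : ∀ v, 0 < f v)
    (h : Integrable (fun x => density f x * Real.log (f x.2.1)) (measure E)) :
    Integrable (entropyProduction f) (measure E) := by
  rw [entropyProduction_eq_neg]
  exact (integrable_density_mul_sub_collide (φ := fun p => Real.log (pairProduct f p))
    (integrable_density_mul_log_pairProduct hf h)).neg

lemma integral_entropyProduction (hf : ∀ v, 0 < f v)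
    (h : Integrable (fun x => density f x * Real.log (f x.2.1)) (measure E)) :
    ∫ x, entropyProduction f x ∂measure E =
      -4 * ∫ x, density f x * Real.log (f x.2.1) ∂measure E := by
  have hswap : ∫ x, density f x * Real.log (pairProduct f x.2) ∂measure E =
      2 * ∫ x, density f x * Real.log (f x.2.1) ∂measure E := by
    simpa only [log_pairProduct hf, Prod.fst_swap] using
      integral_density_mul_add_swap (φ := fun p => Real.log (f p.1)) h
  rw [entropyProduction_eq_neg, integral_neg,
    integral_density_mul_sub_collide (φ := fun p => Real.log (pairProduct f p))
      (integrable_density_mul_log_pairProduct hf h), hswap]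
  ring

theorem pairProduct_collide_of_integral_eq_zero (hf : Continuous f) (hpos : ∀ v, 0 < f v)
    (hint : Integrable (fun x => density f x * Real.log (f x.2.1)) (measure E))
    (hzero : ∫ x, density f x * Real.log (f x.2.1) ∂measure E = 0) (x : Collisions E) :
    pairProduct f (collide x).2 = pairProduct f x.2 := by
  have hprod : ∫ x, entropyProduction f x ∂measure E = 0 := by
    rw [integral_entropyProduction hpos hint, hzero, mul_zero]
  exact (entropyProduction_eq_zero_iff hpos).1 <| congrFun
    (eq_zero_of_integral_eq_zero (continuous_entropyProduction hf hpos)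
      (entropyProduction_nonneg hpos) (integrable_entropyProduction hpos hint) hprod) x

/-- The hard-sphere collision integral `v ↦ ∫∫ (f(v')f(v*') − f(v)f(v*)) |(v−v*)·ω| dω dv*` on any
Euclidean space. -/
def collisionOperator (f : E → ℝ) (v : E) : ℝ :=
  ∫ vs, ∫ ω, density f (ω, (v, vs)) ∂(volume : Measure E).toSphere

lemma integral_density_mul {ψ : E → ℝ}
    (h : Integrable (fun x => density f x * ψ x.2.1) (measure E)) :
    ∫ x, density f x * ψ x.2.1 ∂measure E = ∫ v, collisionOperator f v * ψ v := by
  unfold measure at h ⊢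
  rw [integral_prod_symm _ h, integral_prod _ h.integral_prod_right]
  simp only [collisionOperator, integral_mul_const]

end WeakForm

/-! ### Integrability -/

section Integrability

variable {E : Type*} [NormedAddCommGroup E]

/-- The weight `(1 + |v|)(1 + |v*|)` in which decay in both velocities is measured. -/
def weight (p : E × E) : ℝ := (1 + ‖p.1‖) * (1 + ‖p.2‖)

lemma weight_pos (p : E × E) : 0 < weight p := by
  unfold weight
  positivity

lemma one_add_le_weight {r : ℝ} {p : E × E} (h : r ^ 2 ≤ ‖p.1‖ ^ 2 + ‖p.2‖ ^ 2) :
    1 + r ≤ weight p := by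
  have hmul := mul_nonneg (norm_nonneg p.1) (norm_nonneg p.2)
  have hadd : r ≤ ‖p.1‖ + ‖p.2‖ := le_of_sq_le_sq (by linarith [add_sq ‖p.1‖ ‖p.2‖])
    (add_nonneg (norm_nonneg _) (norm_nonneg _))
  unfold weight
  linarith

lemma norm_sub_le_weight (p : E × E) : ‖p.1 - p.2‖ ≤ weight p := by
  have := norm_sub_le p.1 p.2
  have := mul_nonneg (norm_nonneg p.1) (norm_nonneg p.2)
  unfold weight
  linarith

lemma weight_le_sq_weight {p q : E × E}
    (h : ‖q.1‖ ^ 2 + ‖q.2‖ ^ 2 = ‖p.1‖ ^ 2 + ‖p.2‖ ^ 2) : weight p ≤ weight q ^ 2 := by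
  rw [sq]
  exact mul_le_mul (one_add_le_weight (h ▸ le_add_of_nonneg_right (sq_nonneg _)))
    (one_add_le_weight (h ▸ le_add_of_nonneg_left (sq_nonneg _))) (by positivity) (weight_pos q).le

lemma weight_pow_mul_pairProduct_le {f : E → ℝ} (hf : ∀ v, 0 ≤ f v) {k : ℕ} {C : ℝ}
    (hC : ∀ v, (1 + ‖v‖) ^ (2 * k) * f v ≤ C) {p q : E × E}
    (h : ‖q.1‖ ^ 2 + ‖q.2‖ ^ 2 = ‖p.1‖ ^ 2 + ‖p.2‖ ^ 2) :
    weight p ^ k * pairProduct f q ≤ C ^ 2 := by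
  have hq : 0 ≤ pairProduct f q := mul_nonneg (hf _) (hf _)
  calc weight p ^ k * pairProduct f q ≤ (weight q ^ 2) ^ k * pairProduct f q := by
        gcongr
        exacts [(weight_pos p).le, weight_le_sq_weight h]
    _ = ((1 + ‖q.1‖) ^ (2 * k) * f q.1) * ((1 + ‖q.2‖) ^ (2 * k) * f q.2) := by
        rw [← pow_mul, weight, mul_pow, pairProduct, mul_mul_mul_comm]
    _ ≤ C * C := mul_le_mul (hC _) (hC _) (mul_nonneg (by positivity) (hf _))
        ((mul_nonneg (by positivity) (hf _)).trans (hC q.1))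
    _ = C ^ 2 := (sq C).symm

lemma weight_pow_mul_abs_density_le [InnerProductSpace ℝ E] {f : E → ℝ} (hf : ∀ v, 0 ≤ f v)
    {k : ℕ} {C : ℝ} (hC : ∀ v, (1 + ‖v‖) ^ (2 * (k + 1)) * f v ≤ C) (x : Collisions E) :
    weight x.2 ^ k * |density f x| ≤ C ^ 2 := by
  have hw := (weight_pos x.2).le
  have hpost := weight_pow_mul_pairProduct_le hf hC
    (sq_norm_collisionMap (norm_eq_of_mem_sphere x.1) x.2)
  have hpre := weight_pow_mul_pairProduct_le hf hC (p := x.2) rfl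
  have hkernel : kernel x ≤ weight x.2 :=
    ((abs_real_inner_le_norm _ _).trans_eq (by simp)).trans (norm_sub_le_weight x.2)
  have hnonneg : ∀ p, 0 ≤ weight x.2 ^ (k + 1) * pairProduct f p := fun p =>
    mul_nonneg (by positivity) (mul_nonneg (hf _) (hf _))
  calc weight x.2 ^ k * |density f x|
      = weight x.2 ^ k * (|pairProduct f (collide x).2 - pairProduct f x.2| * kernel x) := by
        rw [density, abs_mul, kernel, abs_abs]
    _ ≤ weight x.2 ^ k * (|pairProduct f (collide x).2 - pairProduct f x.2| * weight x.2) := by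
        gcongr
    _ = |weight x.2 ^ (k + 1) * pairProduct f (collide x).2 -
          weight x.2 ^ (k + 1) * pairProduct f x.2| := by
        rw [← mul_sub, abs_mul, abs_of_nonneg (pow_nonneg hw _), pow_succ]
        ring
    _ ≤ C ^ 2 := abs_sub_le_of_nonneg_of_le (hnonneg _) hpost (hnonneg _) hpre

variable [InnerProductSpace ℝ E] [FiniteDimensional ℝ E] [MeasurableSpace E] [BorelSpace E]

lemma integrable_inv_weight_pow {d : ℕ} (hd : Module.finrank ℝ E < d) :
    Integrable (fun x : Collisions E => (weight x.2 ^ d)⁻¹) (measure E) := by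
  have h : Integrable (fun v : E => ((1 + ‖v‖) ^ d)⁻¹) := by
    simpa only [Real.rpow_neg (add_nonneg zero_le_one (norm_nonneg _)), Real.rpow_natCast] using
      integrable_one_add_norm (μ := (volume : Measure E)) (r := d) (by exact_mod_cast hd)
  simp only [weight, mul_pow, mul_inv]
  exact (h.mul_prod h).comp_snd (volume : Measure E).toSphere

/-- One power of the weight absorbs `|v − v*|`, `m` powers absorb `φ`, and `d` powers make the rest
integrable. -/
lemma integrable_density_mul {f φ : E → ℝ} (hf : Continuous f) (hnonneg : ∀ v, 0 ≤ f v)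
    (hφ : Continuous φ) {L C : ℝ} {m d : ℕ} (hL : ∀ v, |φ v| ≤ L * (1 + ‖v‖) ^ m)
    (hd : Module.finrank ℝ E < d) (hC : ∀ v, (1 + ‖v‖) ^ (2 * (d + m + 1)) * f v ≤ C) :
    Integrable (fun x => density f x * φ x.2.1) (measure E) := by
  refine ((integrable_inv_weight_pow hd).const_mul (C ^ 2 * L)).mono'
    ((continuous_density hf).mul (hφ.comp continuous_snd.fst)).aestronglyMeasurable
    (.of_forall fun x => ?_)
  have hw := weight_pos x.2
  have hL0 : 0 ≤ L := by simpa using (abs_nonneg _).trans (hL 0)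
  have hφx : |φ x.2.1| ≤ L * weight x.2 ^ m := (hL _).trans <| by
    gcongr
    exact one_add_le_weight (le_add_of_nonneg_right (sq_nonneg _))
  rw [← div_eq_mul_inv, le_div_iff₀ (by positivity), Real.norm_eq_abs, abs_mul]
  calc |density f x| * |φ x.2.1| * weight x.2 ^ d
      ≤ |density f x| * (L * weight x.2 ^ m) * weight x.2 ^ d := by gcongr
    _ = weight x.2 ^ (d + m) * |density f x| * L := by ring
    _ ≤ C ^ 2 * L := by gcongr; exact weight_pow_mul_abs_density_le hnonneg hC x

end Integrability

end Collisions

/-! ### The equality case -/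

theorem H_theorem_equality_case_general {E : Type*} [NormedAddCommGroup E] [InnerProductSpace ℝ E]
    [FiniteDimensional ℝ E] [MeasurableSpace E] [BorelSpace E] {f : E → ℝ}
    (hf_cont : Continuous f) (hf_pos : ∀ v, 0 < f v)
    (hint : Integrable (fun x => Collisions.density f x * Real.log (f x.2.1))
      (Collisions.measure E))
    (h : ∫ v, Collisions.collisionOperator f v * Real.log (f v) = 0) :
    (∀ (ω : E) (p : E × E), ‖ω‖ = 1 → pairProduct f (collisionMap ω p) = pairProduct f p) ∧
      ∀ v, Collisions.collisionOperator f v = 0 := by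
  have hcollide := Collisions.pairProduct_collide_of_integral_eq_zero hf_cont hf_pos hint
    ((Collisions.integral_density_mul (ψ := fun v => Real.log (f v)) hint).trans h)
  refine ⟨fun ω p hω => hcollide (⟨ω, mem_sphere_zero_iff_norm.2 hω⟩, p), fun v => ?_⟩
  simp only [Collisions.collisionOperator, Collisions.density, hcollide, sub_self, zero_mul,
    integral_zero]

lemma pairProduct_collisionMap (f : EuclideanSpace ℝ (Fin 3) → ℝ)
    (v vs ω : EuclideanSpace ℝ (Fin 3)) :
    pairProduct f (collisionMap ω (v, vs)) = f (vPost v vs ω) * f (vsPost v vs ω) := by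
  rw [collisionMap_apply]
  rfl

lemma collisionOperator_eq_collisionIntegral (f : EuclideanSpace ℝ (Fin 3) → ℝ) :
    Collisions.collisionOperator f = collisionIntegral f := by
  ext v
  simp only [Collisions.collisionOperator, Collisions.density, Collisions.collide,
    pairProduct_collisionMap]
  rfl

lemma RapidlyDecaying.integrable_density_mul_log {f : EuclideanSpace ℝ (Fin 3) → ℝ}
    (hdec : RapidlyDecaying f) (hf : Continuous f) (hpos : ∀ v, 0 < f v) (hlog : LogPolyGrowth f) :
    Integrable (fun x => Collisions.density f x * Real.log (f x.2.1)) (Collisions.measure _) := by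
  obtain ⟨L, m, hL⟩ := hlog
  obtain ⟨C, hC⟩ := hdec (2 * (4 + m + 1))
  exact Collisions.integrable_density_mul hf (fun v => (hpos v).le)
    (hf.log fun v => (hpos v).ne') hL (by simp) hC

/-- **Boltzmann's H theorem (equality case).** For `f` continuous, strictly positive and
rapidly decaying with `ln f` of polynomial growth, if `∫ C(f) ln f dv = 0` then
`f(v')f(v*') = f(v)f(v*)` for all `v, v*` and all unit vectors `ω`, and consequently
`C(f)(v) = 0` for every `v`. -/
theorem H_theorem_equality_case (f : EuclideanSpace ℝ (Fin 3) → ℝ)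
    (hf_cont : Continuous f) (hf_pos : ∀ v, 0 < f v)
    (hf_dec : RapidlyDecaying f) (hf_log : LogPolyGrowth f)
    (h : (∫ v, collisionIntegral f v * Real.log (f v)) = 0) :
    (∀ v vs ω : EuclideanSpace ℝ (Fin 3), ‖ω‖ = 1 →
      f (vPost v vs ω) * f (vsPost v vs ω) = f v * f vs) ∧
    (∀ v : EuclideanSpace ℝ (Fin 3), collisionIntegral f v = 0) := by
  have hint := hf_dec.integrable_density_mul_log hf_cont hf_pos hf_log
  rw [← collisionOperator_eq_collisionIntegral] at h ⊢
  obtain ⟨hpair, hzero⟩ := H_theorem_equality_case_general hf_cont hf_pos hint h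
  exact ⟨fun v vs ω hω => (pairProduct_collisionMap f v vs ω).symm.trans (hpair ω (v, vs) hω),
    hzero⟩

end
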